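/- Let ε,b > 0 and let c:(−ε,b) → ℝ^{n+2} be smooth with ⟨c(t),c(t)⟩ = 0, c(t) ≠ 0 and ⟨c′(t),c′(t)⟩ = 1 for all t. Let λ ∈ ℝ with 2λ > 1 and fix p ∈ (0,b). Let T:(0,b) → End(ℝ^{n+2}) be differentiable with T(p) = id and T′(t) = (λ/t²)·(T(t)∘(c(t)∧c′(t))), and let ĉ:(0,b) → ℝ^{n+2} be differentiable, nowhere zero, with ⟨ĉ(t),ĉ(t)⟩ = 0 for all t and ĉ′(t) = −(λ/t²)·(⟨c(t),ĉ(t)⟩c′(t) − ⟨c′(t),ĉ(t)⟩c(t)). If ĉ(p) is NOT a projective accumulation point at 0 of the curve t ↦ T(t)(c(t)), then there exist nonzero reals r(t) with r(t)·ĉ(t) → c(0) as t → 0⁺; that is, the λ-Darboux transform converges projectively to ⟨c(0)⟩. -/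

import Mathlib

open scoped BigOperators Topology
open Filter Set MeasureTheory

noncomputable section

abbrev E (n : ℕ) := EuclideanSpace ℝ (Fin (n + 2))

/-- Minkowski inner product of signature (n+1,1). -/
def mink {n : ℕ} (x y : E n) : ℝ :=
  ∑ i, (if i = Fin.last (n + 1) then (-1 : ℝ) else 1) * x i * y i

variable {n : ℕ}

lemma mink_comm (x y : E n) : mink x y = mink y x :=
  Finset.sum_congr rfl fun i _ => by ring

lemma mink_add_right (v x y : E n) : mink v (x + y) = mink v x + mink v y := by
  simp [mink, mul_add, Finset.sum_add_distrib]

lemma mink_smul_right (v : E n) (c : ℝ) (x : E n) : mink v (c • x) = c * mink v x := by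
  unfold mink
  rw [Finset.mul_sum]
  refine Finset.sum_congr rfl fun i _ => ?_
  simp only [PiLp.smul_apply, smul_eq_mul]
  ring

lemma mink_add_left (x y v : E n) : mink (x + y) v = mink x v + mink y v := by
  rw [mink_comm, mink_add_right, mink_comm v x, mink_comm v y]

lemma mink_smul_left (c : ℝ) (x v : E n) : mink (c • x) v = c * mink x v := by
  rw [mink_comm, mink_smul_right, mink_comm v x]

/-- `v ∧ w` as an endomorphism: `x ↦ ⟨v,x⟩ w − ⟨w,x⟩ v`. -/
def wedge {n : ℕ} (v w : E n) : E n →L[ℝ] E n :=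
  LinearMap.toContinuousLinearMap
    { toFun := fun x => mink v x • w - mink w x • v
      map_add' := by
        intro x y
        simp only [mink_add_right, add_smul]
        abel
      map_smul' := by
        intro c x
        simp only [mink_smul_right, RingHom.id_apply, mul_smul, smul_sub] }

/-- rank one endomorphism `vw* : x ↦ ⟨x,w⟩ v`. -/
def rankOne {n : ℕ} (v w : E n) : E n →L[ℝ] E n :=
  LinearMap.toContinuousLinearMap
    { toFun := fun x => mink x w • v
      map_add' := by
        intro x y
        simp only [mink_add_left, add_smul]
      map_smul' := by
        intro c x
        simp only [mink_smul_left, RingHom.id_apply, mul_smul] }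

/-- A nonzero `x` is a projective accumulation point at `0` of a curve
`γ : (0,b) → ℝ^{n+2} ∖ {0}` if some sequence `tᵢ → 0⁺` in `(0,b)` and reals `rᵢ`
satisfy `rᵢ • γ (tᵢ) → x`. -/
def projAccum {n : ℕ} (b : ℝ) (γ : ℝ → E n) (x : E n) : Prop :=
  ∃ (ts : ℕ → ℝ) (rs : ℕ → ℝ), (∀ i, ts i ∈ Set.Ioo (0:ℝ) b) ∧
    Tendsto ts atTop (𝓝 0) ∧ Tendsto (fun i => rs i • γ (ts i)) atTop (𝓝 x)

/-! ### scalar analysis -/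

lemma conv_of_deriv_bdd (f f' : ℝ → ℝ) (δ C : ℝ) (hδ : 0 < δ)
    (hf : ∀ t ∈ Ioo (0:ℝ) δ, HasDerivAt f (f' t) t) (hC : ∀ t ∈ Ioo (0:ℝ) δ, |f' t| ≤ C) :
    ∃ L, Tendsto f (𝓝[>] 0) (𝓝 L) := by
  have hl : LipschitzOnWith (Real.toNNReal C) f (Ioo 0 δ) := by
    refine Convex.lipschitzOnWith_of_nnnorm_hasDerivWithin_le (convex_Ioo 0 δ)
      (fun x hx => (hf x hx).hasDerivWithinAt) (fun x hx => ?_)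
    rw [← NNReal.coe_le_coe, coe_nnnorm, Real.norm_eq_abs]
    exact (hC x hx).trans (Real.le_coe_toNNReal C)
  obtain ⟨g, hg, hfg⟩ := hl.extend_real
  refine ⟨g 0, ?_⟩
  have h1 : Tendsto g (𝓝[>] 0) (𝓝 (g 0)) := (hg.continuous.tendsto 0).mono_left nhdsWithin_le_nhds
  refine h1.congr' ?_
  filter_upwards [Ioo_mem_nhdsGT hδ] with t ht using (hfg ht).symm

lemma h_conv (h h' : ℝ → ℝ) (δ C : ℝ) (hδ : 0 < δ)
    (hf : ∀ t ∈ Ioo (0:ℝ) δ, HasDerivAt h (h' t) t) (hC : ∀ t ∈ Ioo (0:ℝ) δ, |h' t| ≤ C * |h t|)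
    (hne : ∀ t ∈ Ioo (0:ℝ) δ, h t ≠ 0) :
    ∃ L, L ≠ 0 ∧ Tendsto h (𝓝[>] 0) (𝓝 L) := by
  obtain ⟨l, hl⟩ := conv_of_deriv_bdd (fun t => Real.log (h t)) (fun t => h' t / h t) δ C hδ
    (fun t ht => (hf t ht).log (hne t ht)) (fun t ht => by
      rw [abs_div, div_le_iff₀ (abs_pos.2 (hne t ht))]; exact hC t ht)
  have habs : Tendsto (fun t => |h t|) (𝓝[>] 0) (𝓝 (Real.exp l)) := by
    refine ((Real.continuous_exp.tendsto l).comp hl).congr' ?_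
    filter_upwards [Ioo_mem_nhdsGT hδ] with t ht
    simp [Real.exp_log_eq_abs (hne t ht)]
  have hb : ∀ᶠ t in 𝓝[>] (0:ℝ), |h t| < Real.exp l + 1 :=
    habs.eventually (gt_mem_nhds (by linarith))
  obtain ⟨u, hu, hsub⟩ := mem_nhdsGT_iff_exists_Ioo_subset.1 (inter_mem hb (Ioo_mem_nhdsGT hδ))
  obtain ⟨L, hL⟩ := conv_of_deriv_bdd h h' u (|C| * (Real.exp l + 1)) hu
    (fun t ht => hf t (hsub ht).2) (fun t ht => by
      refine (hC t (hsub ht).2).trans ?_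
      have : |h t| < Real.exp l + 1 := (hsub ht).1
      exact mul_le_mul (le_abs_self C) this.le (abs_nonneg _) (abs_nonneg _))
  refine ⟨L, ?_, hL⟩
  have := tendsto_nhds_unique hL.abs habs
  intro h0
  rw [h0, abs_zero] at this
  exact (Real.exp_pos l).ne this

lemma angle_exists (P Q R : ℝ) (hR : R ^ 2 ≤ P ^ 2 + Q ^ 2) :
    ∃ θ : ℝ, P * Real.cos θ + Q * Real.sin θ = R := by
  set ρ := ‖(⟨P, Q⟩ : ℂ)‖ with hρ
  have h1 : ρ * Real.cos (Complex.arg ⟨P, Q⟩) = P := Complex.norm_mul_cos_arg ⟨P, Q⟩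
  have h2 : ρ * Real.sin (Complex.arg ⟨P, Q⟩) = Q := Complex.norm_mul_sin_arg ⟨P, Q⟩
  have hsq : ρ ^ 2 = P ^ 2 + Q ^ 2 := by
    have := Real.sin_sq_add_cos_sq (Complex.arg ⟨P, Q⟩)
    generalize Complex.arg ⟨P, Q⟩ = φ at *
    rw [← h1, ← h2]
    linear_combination (-ρ ^ 2) * this
  have hρ0 : 0 ≤ ρ := norm_nonneg _
  have hle : |R| ≤ ρ := abs_le_of_sq_le_sq (by rw [hsq]; exact hR) hρ0
  rcases hρ0.eq_or_lt with h0 | h0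
  · refine ⟨0, ?_⟩
    rw [← h0] at h1 h2 hle
    have : R = 0 := abs_nonpos_iff.1 hle
    rw [← h1, ← h2, this]; ring
  · refine ⟨Complex.arg ⟨P, Q⟩ + Real.arccos (R / ρ), ?_⟩
    have hc : Real.cos (Real.arccos (R / ρ)) = R / ρ := by
      have := abs_le.1 hle
      apply Real.cos_arccos
      · rw [le_div_iff₀ h0]; linarith
      · rw [div_le_iff₀ h0]; linarith
    rw [Real.cos_add, Real.sin_add, hc]
    set φ := Complex.arg ⟨P, Q⟩
    set s := Real.sin (Real.arccos (R / ρ))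
    rw [← h1, ← h2]
    have : Real.sin φ ^ 2 = 1 - Real.cos φ ^ 2 := by rw [← Real.sin_sq_add_cos_sq φ]; ring
    field_simp
    linear_combination R * this

lemma scalar_main (lam δ C : ℝ) (hlam : 1 < 2 * lam) (hδ : 0 < δ) (h V W e1 e2 : ℝ → ℝ)
    (hW : ∀ t ∈ Ioo (0:ℝ) δ, HasDerivAt W (-(W t + V t) / t) t)
    (hV : ∀ t ∈ Ioo (0:ℝ) δ, HasDerivAt V ((h t + 2 * lam * W t + V t) / t + e1 t) t)
    (hh : ∀ t ∈ Ioo (0:ℝ) δ, HasDerivAt h (e2 t) t)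
    (he1 : ∀ t ∈ Ioo (0:ℝ) δ, |e1 t| ≤ C * |h t|)
    (he2 : ∀ t ∈ Ioo (0:ℝ) δ, |e2 t| ≤ C * |h t|)
    (hWb : ∀ t ∈ Ioo (0:ℝ) δ, |W t| ≤ C * |h t|)
    (hne : ∀ t ∈ Ioo (0:ℝ) δ, h t ≠ 0) :
    (∃ ts : ℕ → ℝ, Tendsto ts atTop (𝓝[>] 0) ∧ Tendsto (fun k => W (ts k)) atTop (𝓝 0)) ∨
    (∃ η > 0, ∃ M, ∀ᶠ t in 𝓝[>] (0:ℝ), η ≤ |h t + lam * W t + V t| ∧ |W t| ≤ M) := by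
  obtain ⟨h0, h0ne, hh0⟩ := h_conv h e2 δ C hδ hh he2 hne
  have hb : ∀ᶠ t in 𝓝[>] (0:ℝ), |h t| < |h0| + 1 := hh0.abs.eventually (gt_mem_nhds (by linarith))
  obtain ⟨u, hu, hsub⟩ := mem_nhdsGT_iff_exists_Ioo_subset.1 (inter_mem hb (Ioo_mem_nhdsGT hδ))
  set D := |C| * (|h0| + 1) with hD
  have hCD : ∀ t ∈ Ioo (0:ℝ) u, C * |h t| ≤ D := fun t ht => by
    have : |h t| < |h0| + 1 := (hsub ht).1
    exact mul_le_mul (le_abs_self C) this.le (abs_nonneg _) (abs_nonneg _)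
  have hD0 : 0 ≤ D := by positivity
  obtain ⟨ω, hω, hωsq⟩ : ∃ ω : ℝ, 0 < ω ∧ ω ^ 2 = 2 * lam - 1 :=
    ⟨Real.sqrt (2 * lam - 1), Real.sqrt_pos.2 (by linarith), Real.sq_sqrt (by linarith)⟩
  set X : ℝ → ℝ := fun t => ω * W t + h t / ω with hX
  set Y : ℝ → ℝ := fun t => -(W t + V t) with hY
  set P : ℝ → ℝ := fun t => X t * Real.cos (ω * Real.log t) - Y t * Real.sin (ω * Real.log t) with hP
  set Q : ℝ → ℝ := fun t => X t * Real.sin (ω * Real.log t) + Y t * Real.cos (ω * Real.log t) with hQ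
  have hX' : ∀ t ∈ Ioo (0:ℝ) u, HasDerivAt X (ω * Y t / t + e2 t / ω) t := fun t ht => by
    have := ((hW t (hsub ht).2).const_mul ω).add ((hh t (hsub ht).2).div_const ω)
    refine this.congr_deriv ?_
    simp only [hY]; ring
  have hY' : ∀ t ∈ Ioo (0:ℝ) u, HasDerivAt Y (-ω * X t / t - e1 t) t := fun t ht => by
    have := ((hW t (hsub ht).2).add (hV t (hsub ht).2)).neg
    refine this.congr_deriv ?_
    have ht0 : t ≠ 0 := ht.1.ne'
    simp only [hX]
    field_simp
    linear_combination W t * hωsq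
  have hco : ∀ t ∈ Ioo (0:ℝ) u, HasDerivAt (fun t => Real.cos (ω * Real.log t))
      (-Real.sin (ω * Real.log t) * (ω * t⁻¹)) t := fun t ht =>
    ((Real.hasDerivAt_log ht.1.ne').const_mul ω).cos
  have hsi : ∀ t ∈ Ioo (0:ℝ) u, HasDerivAt (fun t => Real.sin (ω * Real.log t))
      (Real.cos (ω * Real.log t) * (ω * t⁻¹)) t := fun t ht =>
    ((Real.hasDerivAt_log ht.1.ne').const_mul ω).sin
  have hest : ∀ t ∈ Ioo (0:ℝ) u, ∀ a b : ℝ, |a| ≤ 1 → |b| ≤ 1 →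
      |e2 t / ω * a + e1 t * b| ≤ D / ω + D := fun t ht a b ha hb => by
    have k1 : |e1 t| ≤ D := (he1 t (hsub ht).2).trans (hCD t ht)
    have k2 : |e2 t| ≤ D := (he2 t (hsub ht).2).trans (hCD t ht)
    refine (abs_add_le _ _).trans (add_le_add ?_ ?_)
    · rw [abs_mul, abs_div, abs_of_pos hω]
      calc _ ≤ D / ω * 1 := mul_le_mul (by gcongr) ha (abs_nonneg _) (by positivity)
        _ = _ := mul_one _
    · rw [abs_mul]
      calc _ ≤ D * 1 := mul_le_mul k1 hb (abs_nonneg _) (by positivity)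
        _ = _ := mul_one _
  obtain ⟨P0, hP0⟩ := conv_of_deriv_bdd P (fun t => e2 t / ω * Real.cos (ω * Real.log t) +
      e1 t * Real.sin (ω * Real.log t)) u (D / ω + D) hu (fun t ht => by
    have := ((hX' t ht).mul (hco t ht)).sub ((hY' t ht).mul (hsi t ht))
    refine this.congr_deriv ?_
    ring) (fun t ht => hest t ht _ _ (Real.abs_cos_le_one _) (Real.abs_sin_le_one _))
  obtain ⟨Q0, hQ0⟩ := conv_of_deriv_bdd Q (fun t => e2 t / ω * Real.sin (ω * Real.log t) +
      e1 t * (-Real.cos (ω * Real.log t))) u (D / ω + D) hu (fun t ht => by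
    have := ((hX' t ht).mul (hsi t ht)).add ((hY' t ht).mul (hco t ht))
    refine this.congr_deriv ?_
    ring) (fun t ht => hest t ht _ _ (Real.abs_sin_le_one _) (by
      rw [abs_neg]; exact Real.abs_cos_le_one _))
  by_cases hR : (h0 / ω) ^ 2 ≤ P0 ^ 2 + Q0 ^ 2
  · left
    obtain ⟨θ, hθ⟩ := angle_exists P0 Q0 (h0 / ω) hR
    set ts : ℕ → ℝ := fun k => Real.exp ((θ - k * (2 * Real.pi)) / ω) with hts
    have hlim : Tendsto ts atTop (𝓝[>] 0) := by
      refine tendsto_nhdsWithin_iff.2 ⟨?_, Eventually.of_forall fun k => Real.exp_pos _⟩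
      refine Real.tendsto_exp_atBot.comp ?_
      refine Tendsto.atBot_div_const hω ?_
      refine tendsto_atBot_add_const_left _ θ ?_
      refine tendsto_neg_atTop_atBot.comp ?_
      exact tendsto_natCast_atTop_atTop.atTop_mul_const (by positivity)
    refine ⟨ts, hlim, ?_⟩
    have e : ∀ k, W (ts k) = (P (ts k) * Real.cos θ + Q (ts k) * Real.sin θ - h (ts k) / ω) / ω := by
      intro k
      have hl : ω * Real.log (ts k) = θ - k * (2 * Real.pi) := by
        rw [hts]; simp only [Real.log_exp]; field_simp
      have hc := Real.cos_sub_nat_mul_two_pi θ k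
      have hs := Real.sin_sub_nat_mul_two_pi θ k
      simp only [hP, hQ, hl, hc, hs, hX]
      have := Real.sin_sq_add_cos_sq θ
      field_simp
      linear_combination (-(ω ^ 2 * W (ts k) + h (ts k))) * this
    simp_rw [e]
    have := ((((hP0.comp hlim).mul_const (Real.cos θ)).add
      ((hQ0.comp hlim).mul_const (Real.sin θ))).sub ((hh0.comp hlim).div_const ω)).div_const ω
    rw [hθ, sub_self, zero_div] at this
    exact this
  · right
    push Not at hR
    set g := (h0 / ω) ^ 2 - (P0 ^ 2 + Q0 ^ 2) with hg
    have hgpos : 0 < g := by linarith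
    have hG : Tendsto (fun t => (h t / ω) ^ 2 - (P t ^ 2 + Q t ^ 2)) (𝓝[>] 0) (𝓝 g) :=
      ((hh0.div_const ω).pow 2).sub ((hP0.pow 2).add (hQ0.pow 2))
    have hGe : ∀ᶠ t in 𝓝[>] (0:ℝ), g / 2 < (h t / ω) ^ 2 - (P t ^ 2 + Q t ^ 2) :=
      hG.eventually (lt_mem_nhds (by linarith))
    refine ⟨g / (4 * (D + 1)), by positivity, D, ?_⟩
    filter_upwards [hGe, Ioo_mem_nhdsGT hu] with t ht1 ht
    have hWD : |W t| ≤ D := (hWb t (hsub ht).2).trans (hCD t ht)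
    refine ⟨?_, hWD⟩
    have e : (h t / ω) ^ 2 - (P t ^ 2 + Q t ^ 2) = -2 * W t * (h t + lam * W t + V t) - V t ^ 2 := by
      have h1 : P t ^ 2 + Q t ^ 2 = X t ^ 2 + Y t ^ 2 := by
        simp only [hP, hQ]
        linear_combination (X t ^ 2 + Y t ^ 2) * Real.sin_sq_add_cos_sq (ω * Real.log t)
      rw [h1]; simp only [hX, hY]
      field_simp
      linear_combination (-W t ^ 2 * ω ^ 2) * hωsq
    rw [e] at ht1
    set U := h t + lam * W t + V t
    have k1 : -W t * U ≤ |W t| * |U| := by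
      rw [← abs_mul]; rw [neg_mul]; exact neg_le_abs _
    have k2 : |W t| * |U| ≤ (D + 1) * |U| := by gcongr; linarith
    rw [div_le_iff₀ (by positivity)]
    nlinarith [sq_nonneg (V t)]

/-! ### Minkowski geometry -/

lemma mink_neg_left (x v : E n) : mink (-x) v = - mink x v := by
  rw [← neg_one_smul ℝ, mink_smul_left]; ring
lemma mink_neg_right (x v : E n) : mink v (-x) = - mink v x := by
  rw [← neg_one_smul ℝ, mink_smul_right]; ring
lemma mink_sub_left (x y v : E n) : mink (x - y) v = mink x v - mink y v := by
  rw [sub_eq_add_neg, mink_add_left, mink_neg_left]; ring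
lemma mink_sub_right (x y v : E n) : mink v (x - y) = mink v x - mink v y := by
  rw [sub_eq_add_neg, mink_add_right, mink_neg_right]; ring

lemma mink_hasDerivAt {f g : ℝ → E n} {f' g' : E n} {t : ℝ} (hf : HasDerivAt f f' t)
    (hg : HasDerivAt g g' t) :
    HasDerivAt (fun s => mink (f s) (g s)) (mink f' (g t) + mink (f t) g') t := by
  have hco : ∀ {k : ℝ → E n} {k' : E n}, HasDerivAt k k' t → ∀ i,
      HasDerivAt (fun s => k s i) (k' i) t := fun hk i =>
    (EuclideanSpace.proj (𝕜 := ℝ) i).hasFDerivAt.comp_hasDerivAt t hk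
  unfold mink
  rw [← Finset.sum_add_distrib]
  refine HasDerivAt.fun_sum fun i _ => ?_
  have := ((hco hf i).const_mul (if i = Fin.last (n + 1) then (-1 : ℝ) else 1)).mul (hco hg i)
  exact this.congr_deriv (by ring)

lemma mink_eq (x y : E n) : mink x y = ∑ i : Fin (n + 1), x i.castSucc * y i.castSucc
    - x (Fin.last (n + 1)) * y (Fin.last (n + 1)) := by
  unfold mink
  rw [Fin.sum_univ_castSucc]
  have : ∀ i : Fin (n + 1), i.castSucc ≠ Fin.last (n + 1) := fun i => (Fin.castSucc_lt_last i).ne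
  simp [this]; ring

lemma mink_psd (K x : E n) (hK : mink K K < 0) (hx : mink x K = 0) : 0 ≤ mink x x := by
  rw [mink_eq] at *
  have cs := Finset.sum_mul_sq_le_sq_mul_sq Finset.univ
    (fun i : Fin (n + 1) => x i.castSucc) (fun i => K i.castSucc)
  simp only [← pow_two] at *
  set a := x (Fin.last (n + 1))
  set k := K (Fin.last (n + 1))
  set A := ∑ i : Fin (n + 1), x i.castSucc ^ 2
  set B := ∑ i : Fin (n + 1), K i.castSucc ^ 2
  have hA : 0 ≤ A := Finset.sum_nonneg fun i _ => sq_nonneg _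
  have hB : 0 ≤ B := Finset.sum_nonneg fun i _ => sq_nonneg _
  have e : ∑ i : Fin (n + 1), x i.castSucc * K i.castSucc = a * k := by linarith
  rw [e] at cs
  have hk : 0 < k ^ 2 := by linarith
  by_contra hneg
  push Not at hneg
  nlinarith [mul_le_mul_of_nonneg_left (show B ≤ k ^ 2 by linarith) hA]

lemma mink_cs (K x y : E n) (hK : mink K K < 0) (hx : mink x K = 0) (hy : mink y K = 0) :
    mink x y ^ 2 ≤ mink x x * mink y y := by
  have h : ∀ s : ℝ, 0 ≤ mink y y * (s * s) + (2 * mink x y) * s + mink x x := fun s => by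
    have := mink_psd K (x + s • y) hK (by rw [mink_add_left, mink_smul_left, hx, hy]; ring)
    simp only [mink_add_left, mink_smul_left, mink_add_right, mink_smul_right] at this
    rw [mink_comm y x] at this
    linarith
  have := discrim_le_zero h
  unfold discrim at this
  nlinarith

lemma mink_est (κ B : ℝ) (hκ : 0 < κ) (hB : 0 ≤ B) (K v w : E n) (hK : κ ≤ - mink K K)
    (hv : mink v v ≤ 0) (hw : |mink w w| ≤ B ^ 2) (hwK : |mink w K| ≤ B) :
    |mink w v| ≤ (1 + 2 / κ) * B * |mink v K| := by
  set m := - mink K K with hm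
  have hmpos : 0 < m := hκ.trans_le hK
  have hKK : mink K K = -m := by rw [hm]; ring
  set h := mink v K with hh
  set k := mink w K with hk
  have p1 : mink (v + (h / m) • K) K = 0 := by
    rw [mink_add_left, mink_smul_left, hKK, ← hh]; field_simp; ring
  have p2 : mink (w + (k / m) • K) K = 0 := by
    rw [mink_add_left, mink_smul_left, hKK, ← hk]; field_simp; ring
  have cs := mink_cs K _ _ (by linarith) p2 p1
  have hKv : mink K v = h := mink_comm _ _
  have hKw : mink K w = k := mink_comm _ _
  simp only [mink_add_left, mink_smul_left, mink_add_right, mink_smul_right, hKK, hKv, hKw,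
    ← hh, ← hk] at cs
  have e1 : mink w v + k / m * h + h / m * (k + k / m * -m) = mink w v + k * h / m := by
    field_simp; ring
  have e2 : mink w w + k / m * k + k / m * (k + k / m * -m) = mink w w + k ^ 2 / m := by
    field_simp; ring
  have e3 : mink v v + h / m * h + h / m * (h + h / m * -m) = mink v v + h ^ 2 / m := by
    field_simp; ring
  have cs' : (mink w v + k * h / m) ^ 2 ≤ (mink w w + k ^ 2 / m) * (mink v v + h ^ 2 / m) := by
    rw [← e1, ← e2, ← e3]; exact cs
  have hmk : 1 / m ≤ 1 / κ := one_div_le_one_div_of_le hκ hK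
  have hk2 : k ^ 2 ≤ B ^ 2 := sq_le_sq' (by linarith [abs_le.1 hwK]) (abs_le.1 hwK).2
  have f1 : mink w w + k ^ 2 / m ≤ B ^ 2 * (1 + 1 / κ) := by
    have : k ^ 2 / m ≤ B ^ 2 * (1 / κ) := by
      rw [div_eq_mul_one_div]; gcongr
    have := (abs_le.1 hw).2
    linarith
  have f2 : mink v v + h ^ 2 / m ≤ h ^ 2 * (1 + 1 / κ) := by
    have : h ^ 2 / m ≤ h ^ 2 * (1 / κ) := by
      rw [div_eq_mul_one_div]; gcongr
    nlinarith [sq_nonneg h]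
  have g1 : 0 ≤ mink w w + k ^ 2 / m := by
    have := mink_psd K _ (by linarith) p2
    simp only [mink_add_left, mink_smul_left, mink_add_right, mink_smul_right, hKK, hKv, hKw,
      ← hh, ← hk] at this
    rw [← e2]; linarith
  have cs2 : (mink w v + k * h / m) ^ 2 ≤ ((1 + 1 / κ) * B * |h|) ^ 2 := by
    refine cs'.trans ?_
    calc _ ≤ (mink w w + k ^ 2 / m) * (h ^ 2 * (1 + 1 / κ)) := by gcongr
      _ ≤ (B ^ 2 * (1 + 1 / κ)) * (h ^ 2 * (1 + 1 / κ)) := by gcongr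
      _ = _ := by rw [mul_pow, mul_pow, sq_abs]; ring
  have a1 := abs_le_of_sq_le_sq cs2 (by positivity)
  have a2 : |k * h / m| ≤ 1 / κ * B * |h| := by
    rw [abs_div, abs_mul, abs_of_pos hmpos, div_eq_mul_one_div]
    calc _ ≤ B * |h| * (1 / κ) := by gcongr
      _ = _ := by ring
  calc |mink w v| = |(mink w v + k * h / m) - k * h / m| := by congr 1; ring
    _ ≤ _ := abs_sub _ _
    _ ≤ (1 + 1 / κ) * B * |h| + 1 / κ * B * |h| := add_le_add a1 a2
    _ = _ := by ring

lemma null_last_ne (x : E n) (hx : mink x x ≤ 0) (h0 : x ≠ 0) : x (Fin.last (n + 1)) ≠ 0 := by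
  intro h
  apply h0
  rw [mink_eq, h] at hx
  have hs : ∑ i : Fin (n + 1), x i.castSucc * x i.castSucc = 0 :=
    le_antisymm (by linarith) (Finset.sum_nonneg fun i _ => mul_self_nonneg _)
  have := (Finset.sum_eq_zero_iff_of_nonneg (fun i _ => mul_self_nonneg _)).1 hs
  ext i
  refine Fin.lastCases ?_ (fun j => ?_) i
  · simpa using h
  · simpa using this j (Finset.mem_univ _)

lemma null_dist (x y : E n) (hx : mink x x = 0) (hy : mink y y = 0)
    (h : x (Fin.last (n + 1)) = y (Fin.last (n + 1))) : ‖x - y‖ ^ 2 = -2 * mink x y := by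
  have h1 : mink (x - y) (x - y) = -2 * mink x y := by
    simp only [mink_sub_left, mink_sub_right, hx, hy]; rw [mink_comm y x]; ring
  rw [← h1, EuclideanSpace.norm_sq_eq, mink_eq, Fin.sum_univ_castSucc]
  simp [h, pow_two]

/-- time axis -/
def eT (n : ℕ) : E n := EuclideanSpace.single (Fin.last (n + 1)) 1

lemma mink_eT (x : E n) : mink x (eT n) = - x (Fin.last (n + 1)) := by
  rw [mink_eq]
  have : ∀ i : Fin (n + 1), i.castSucc ≠ Fin.last (n + 1) := fun i => (Fin.castSucc_lt_last i).ne
  simp [eT, this]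

/-- two curves of null vectors whose normalised product tends to zero -/
lemma null_tendsto {ι : Type*} (l : Filter ι) (u z : ι → E n) (hu : ∀ᶠ i in l, mink (u i) (u i) = 0)
    (hune : ∀ᶠ i in l, u i (Fin.last (n + 1)) ≠ 0) (hz : ∀ᶠ i in l, mink (z i) (z i) = 0)
    (z0 : E n) (hz0 : Tendsto z l (𝓝 z0))
    (h : Tendsto (fun i => mink (u i) (z i) / u i (Fin.last (n + 1))) l (𝓝 0)) :
    Tendsto (fun i => (z i (Fin.last (n + 1)) / u i (Fin.last (n + 1))) • u i) l (𝓝 z0) := by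
  have hlast : Tendsto (fun i => z i (Fin.last (n + 1))) l (𝓝 (z0 (Fin.last (n + 1)))) :=
    ((EuclideanSpace.proj (𝕜 := ℝ) (Fin.last (n + 1))).continuous.tendsto z0).comp hz0
  have h1 : Tendsto (fun i => ‖(z i (Fin.last (n + 1)) / u i (Fin.last (n + 1))) • u i - z i‖ ^ 2)
      l (𝓝 0) := by
    have h2 : Tendsto (fun i => -2 * (z i (Fin.last (n + 1)) *
        (mink (u i) (z i) / u i (Fin.last (n + 1))))) l (𝓝 0) := by
      simpa using (hlast.mul h).const_mul (-2)
    refine h2.congr' ?_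
    filter_upwards [hu, hune, hz] with i h1 h2 h3
    rw [null_dist _ _ (by rw [mink_smul_left, mink_smul_right, h1]; ring) h3
      (by simp [h2]), mink_smul_left]
    ring
  have h3 : Tendsto (fun i => ‖(z i (Fin.last (n + 1)) / u i (Fin.last (n + 1))) • u i - z i‖)
      l (𝓝 0) := by
    have := h1.sqrt
    simpa [Real.sqrt_sq] using this
  have := (tendsto_zero_iff_norm_tendsto_zero.2 h3).add hz0
  simpa using this

/-! ### Calapso transforms: the adjoint -/

/-- signature matrix -/
def Jm (n : ℕ) : E n →L[ℝ] E n :=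
  LinearMap.toContinuousLinearMap
    { toFun := fun x => WithLp.toLp 2
        (fun i => (if i = Fin.last (n + 1) then (-1 : ℝ) else 1) * x i)
      map_add' := by intro x y; ext i; simp [mul_add]
      map_smul' := by intro c x; ext i; simp }

lemma Jm_apply (x : E n) (i : Fin (n + 2)) :
    Jm n x i = (if i = Fin.last (n + 1) then (-1 : ℝ) else 1) * x i := rfl

lemma Jm_Jm (x : E n) : Jm n (Jm n x) = x := by
  ext i
  rw [Jm_apply, Jm_apply]
  split_ifs <;> ring

lemma mink_inner (x y : E n) : mink x y = inner ℝ x (Jm n y) := by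
  rw [PiLp.inner_apply]
  unfold mink
  refine Finset.sum_congr rfl fun i _ => ?_
  rw [Jm_apply]
  simp only [RCLike.inner_apply, conj_trivial]
  ring

lemma mink_ext (x y : E n) (h : ∀ u, mink u x = mink u y) : x = y := by
  simp only [mink_inner] at h
  have := ext_inner_left ℝ h
  rw [← Jm_Jm x, this, Jm_Jm]

lemma wedge_apply (v w x : E n) : wedge v w x = mink v x • w - mink w x • v := rfl

lemma wedge_skew (v w x y : E n) : mink (wedge v w x) y = - mink x (wedge v w y) := by
  simp only [wedge_apply, mink_sub_left, mink_sub_right, mink_smul_left, mink_smul_right]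
  rw [mink_comm x w, mink_comm x v]; ring

/-- Minkowski adjoint -/
def madj (A : E n →L[ℝ] E n) : E n →L[ℝ] E n := Jm n * star A * Jm n

lemma mink_madj (A : E n →L[ℝ] E n) (u x : E n) : mink u (madj A x) = mink (A u) x := by
  rw [mink_inner, mink_inner]
  have : Jm n (madj A x) = ContinuousLinearMap.adjoint A (Jm n x) := by
    unfold madj
    rw [ContinuousLinearMap.star_eq_adjoint]
    exact Jm_Jm _
  rw [this, ContinuousLinearMap.adjoint_inner_right]

lemma madj_hasDerivAt {T : ℝ → E n →L[ℝ] E n} {T' : E n →L[ℝ] E n} {t : ℝ}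
    (h : HasDerivAt T T' t) (x : E n) :
    HasDerivAt (fun s => madj (T s) x) (madj T' x) t := by
  have h1 : HasDerivAt (fun s => madj (T s)) (madj T') t :=
    (h.star.const_mul (Jm n)).mul_const (Jm n)
  have := h1.clm_apply (hasDerivAt_const t x)
  simpa using this

lemma const_of_deriv {F : Type*} [NormedAddCommGroup F] [NormedSpace ℝ F] {f : ℝ → F} {b : ℝ}
    (h : ∀ t ∈ Ioo (0:ℝ) b, HasDerivAt f 0 t) {s t : ℝ} (hs : s ∈ Ioo (0:ℝ) b)
    (ht : t ∈ Ioo (0:ℝ) b) : f s = f t :=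
  isOpen_Ioo.is_const_of_deriv_eq_zero isPreconnected_Ioo
    (fun x hx => (h x hx).differentiableAt.differentiableWithinAt)
    (fun x hx => (h x hx).deriv) hs ht

lemma sol_mink_const {b : ℝ} {A : ℝ → E n →L[ℝ] E n} {v w : ℝ → E n}
    (hA : ∀ t x y, mink (A t x) y = - mink x (A t y)) (m : ℝ → ℝ)
    (hv : ∀ t ∈ Ioo (0:ℝ) b, HasDerivAt v ((-m t) • A t (v t)) t)
    (hw : ∀ t ∈ Ioo (0:ℝ) b, HasDerivAt w ((-m t) • A t (w t)) t) {s t : ℝ}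
    (hs : s ∈ Ioo (0:ℝ) b) (ht : t ∈ Ioo (0:ℝ) b) :
    mink (v s) (w s) = mink (v t) (w t) := by
  refine const_of_deriv (f := fun t => mink (v t) (w t)) (fun t ht => ?_) hs ht
  refine (mink_hasDerivAt (hv t ht) (hw t ht)).congr_deriv ?_
  rw [mink_smul_left, mink_smul_right, hA]; ring

lemma calapso {b lam p : ℝ} (hp : p ∈ Ioo (0:ℝ) b) {c c1 : ℝ → E n}
    (T : ℝ → E n →L[ℝ] E n) (hTp : T p = 1)
    (hT : ∀ t ∈ Set.Ioo (0:ℝ) b,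
      HasDerivAt T ((lam / t ^ 2) • (T t * wedge (c t) (c1 t))) t) :
    (∀ x, ∀ t ∈ Ioo (0:ℝ) b, HasDerivAt (fun s => madj (T s) x)
      ((-(lam / t ^ 2)) • wedge (c t) (c1 t) (madj (T t) x)) t) ∧
    (∀ x y, ∀ t ∈ Ioo (0:ℝ) b, mink (madj (T t) x) (madj (T t) y) = mink x y) ∧
    (∀ x y, ∀ t ∈ Ioo (0:ℝ) b, mink (T t x) (T t y) = mink x y) := by
  have h1 : ∀ x, ∀ t ∈ Ioo (0:ℝ) b, HasDerivAt (fun s => madj (T s) x)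
      ((-(lam / t ^ 2)) • wedge (c t) (c1 t) (madj (T t) x)) t := by
    intro x t ht
    refine (madj_hasDerivAt (hT t ht) x).congr_deriv ?_
    refine mink_ext _ _ fun u => ?_
    rw [mink_madj, mink_smul_right]
    have : ((lam / t ^ 2) • (T t * wedge (c t) (c1 t))) u
        = (lam / t ^ 2) • T t (wedge (c t) (c1 t) u) := rfl
    rw [this, mink_smul_left, ← mink_madj, wedge_skew]; ring
  have hp1 : ∀ x, madj (T p) x = x := fun x => mink_ext _ _ fun u => by
    rw [mink_madj, hTp]; rfl
  have h2 : ∀ x y, ∀ t ∈ Ioo (0:ℝ) b, mink (madj (T t) x) (madj (T t) y) = mink x y := by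
    intro x y t ht
    rw [sol_mink_const (fun t x y => wedge_skew (c t) (c1 t) x y) (fun t => lam / t ^ 2)
      (h1 x) (h1 y) ht hp, hp1, hp1]
  refine ⟨h1, h2, fun x y t ht => ?_⟩
  have h3 : T t * madj (T t) = 1 := by
    ext1 z
    refine mink_ext _ _ fun u => ?_
    have := h2 u z t ht
    rw [mink_comm, mink_madj, mink_comm] at this
    exact this
  have h4 : madj (T t) * T t = 1 := by
    have e : (T t).toLinearMap * (madj (T t)).toLinearMap = 1 := by
      ext1 z; exact DFunLike.congr_fun h3 z
    have e' := mul_eq_one_comm.1 e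
    ext1 z; exact DFunLike.congr_fun e' z
  rw [← mink_madj]
  have : madj (T t) (T t y) = y := DFunLike.congr_fun h4 y
  rw [this]

lemma darboux_const {b lam p : ℝ} (hp : p ∈ Ioo (0:ℝ) b) {c c1 : ℝ → E n}
    (T : ℝ → E n →L[ℝ] E n) (hTp : T p = 1)
    (hT : ∀ t ∈ Set.Ioo (0:ℝ) b,
      HasDerivAt T ((lam / t ^ 2) • (T t * wedge (c t) (c1 t))) t) (v : ℝ → E n)
    (hv : ∀ t ∈ Ioo (0:ℝ) b, HasDerivAt v ((-(lam / t ^ 2)) • wedge (c t) (c1 t) (v t)) t) :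
    ∀ t ∈ Ioo (0:ℝ) b, T t (v t) = v p := by
  intro t ht
  have : T t (v t) = T p (v p) := by
    refine const_of_deriv (f := fun t => T t (v t)) (fun t ht => ?_) ht hp
    refine ((hT t ht).clm_apply (hv t ht)).congr_deriv ?_
    rw [map_smul]
    change (lam / t ^ 2) • T t (wedge (c t) (c1 t) (v t)) + _ = _
    rw [← add_smul]; simp
  rw [this, hTp]; rfl

/-! ### the moving timelike vector -/

/-- the moving timelike vector -/
def Kv (lam : ℝ) (d : E n) (c c1 : ℝ → E n) (t : ℝ) : E n := (lam / t) • c t - c1 t + t • d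

structure Setup (lam κ B : ℝ) (d : E n) (c c1 c2 : ℝ → E n) (t : ℝ) : Prop where
  t0 : 0 < t
  t1 : t ≤ 1
  hc : HasDerivAt c (c1 t) t
  hc1 : HasDerivAt c1 (c2 t) t
  cc : mink (c t) (c t) = 0
  cc1 : mink (c t) (c1 t) = 0
  c1c1 : mink (c1 t) (c1 t) = 1
  cc2 : mink (c t) (c2 t) = -1
  c1c2 : mink (c1 t) (c2 t) = 0
  bcd : |mink (c t) d + 1| ≤ B * t
  bc1d : |mink (c1 t) d| ≤ B
  bc2d : |mink (c2 t) d| ≤ B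
  bc2c2 : |mink (c2 t) (c2 t)| ≤ B
  bdd : |mink d d| ≤ B
  hK : κ ≤ - mink (Kv lam d c c1 t) (Kv lam d c c1 t)
  bK : |mink (Kv lam d c c1 t) (Kv lam d c c1 t)| ≤ B
  cdlow : 1 / 2 ≤ |mink (c t) d|

lemma Setup.est {lam κ B : ℝ} {d : E n} {c c1 c2 : ℝ → E n} {t : ℝ} (hκ : 0 < κ)
    (H : Setup lam κ B d c c1 c2 t) (v : E n) (hv : mink v v ≤ 0) :
    |mink (c t) v| ≤ (1 + 2 / κ) * ((|lam| + 4) * (B + 1)) * t * |mink v (Kv lam d c c1 t)| ∧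
    |mink (c1 t) v| ≤ (1 + 2 / κ) * ((|lam| + 4) * (B + 1)) * |mink v (Kv lam d c c1 t)| ∧
    |mink (d - c2 t) v| ≤ (1 + 2 / κ) * ((|lam| + 4) * (B + 1)) * |mink v (Kv lam d c c1 t)| := by
  obtain ⟨t0, t1, hc, hc1, cc, cc1, c1c1, cc2, c1c2, bcd, bc1d, bc2d, bc2c2, bdd, hK, bK, -⟩ := H
  set D := (|lam| + 4) * (B + 1) with hD
  have hB : 0 ≤ B := (abs_nonneg _).trans bdd
  have hl : 0 ≤ |lam| := abs_nonneg _
  have hDB : B + 1 ≤ D := by rw [hD]; nlinarith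
  have hD4 : 4 * (B + 1) ≤ D := by rw [hD]; nlinarith
  have hD0 : 0 ≤ D := by linarith
  have ht0 : t ≠ 0 := t0.ne'
  refine ⟨?_, ?_, ?_⟩
  · have e : mink (c t) (Kv lam d c c1 t) = t * mink (c t) d := by
      simp only [Kv, mink_add_right, mink_sub_right, mink_smul_right, cc, cc1]; ring
    have := mink_est κ (D * t) hκ (by positivity) (Kv lam d c c1 t) v (c t) hK hv
      (by rw [cc, abs_zero]; positivity) (by
        rw [e, abs_mul, abs_of_pos t0, mul_comm]
        have : |mink (c t) d| ≤ B + 1 := by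
          have h1 := abs_le.1 bcd
          have h2 : B * t ≤ B := by nlinarith
          rw [abs_le]; constructor <;> linarith
        gcongr; linarith)
    rw [← mul_assoc] at this
    exact this
  · have e : mink (c1 t) (Kv lam d c c1 t) = -1 + t * mink (c1 t) d := by
      simp only [Kv, mink_add_right, mink_sub_right, mink_smul_right, mink_comm (c1 t) (c t), cc1,
        c1c1]; ring
    refine mink_est κ D hκ hD0 (Kv lam d c c1 t) v (c1 t) hK hv
      (by rw [c1c1, abs_one]; nlinarith) ?_
    rw [e]
    refine (abs_add_le _ _).trans ?_
    rw [abs_neg, abs_one, abs_mul, abs_of_pos t0]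
    have : t * |mink (c1 t) d| ≤ 1 * B := by gcongr
    linarith
  · have e : mink (d - c2 t) (Kv lam d c c1 t) = lam * (mink (c t) d + 1) / t - mink (c1 t) d
        + t * (mink d d - mink (c2 t) d) := by
      simp only [Kv, mink_add_right, mink_sub_right, mink_smul_right, mink_sub_left,
        mink_comm (c2 t) (c t), mink_comm (c2 t) (c1 t), mink_comm d (c t), mink_comm d (c1 t),
        cc2, c1c2]
      ring
    refine mink_est κ D hκ hD0 (Kv lam d c c1 t) v (d - c2 t) hK hv ?_ ?_
    · simp only [mink_sub_left, mink_sub_right, mink_comm d (c2 t)]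
      have h1 := abs_le.1 bdd
      have h2 := abs_le.1 bc2d
      have h3 := abs_le.1 bc2c2
      rw [abs_le]; constructor <;> nlinarith
    · rw [e]
      have h1 : |lam * (mink (c t) d + 1) / t| ≤ |lam| * B := by
        rw [abs_div, abs_mul, abs_of_pos t0, div_le_iff₀ t0, mul_assoc]
        gcongr
      have h2 := abs_le.1 bdd
      have h3 := abs_le.1 bc2d
      have h4 : |t * (mink d d - mink (c2 t) d)| ≤ 1 * (2 * B) := by
        rw [abs_mul, abs_of_pos t0]
        gcongr
        rw [abs_le]; constructor <;> linarith
      refine (abs_add_le _ _).trans ?_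
      have h5 := abs_sub (lam * (mink (c t) d + 1) / t) (mink (c1 t) d)
      rw [hD]
      nlinarith

lemma Setup.sol {lam κ B : ℝ} {d : E n} {c c1 c2 : ℝ → E n} {t : ℝ} (hκ : 0 < κ)
    (H : Setup lam κ B d c c1 c2 t) (v : ℝ → E n) (hv : mink (v t) (v t) ≤ 0)
    (hv' : HasDerivAt v ((-(lam / t ^ 2)) • wedge (c t) (c1 t) (v t)) t) (C D : ℝ)
    (hD : D = (1 + 2 / κ) * ((|lam| + 4) * (B + 1)))
    (hC : C = 2 * |lam| * B * D + D) (h V W e1 e2 : ℝ → ℝ)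
    (hh : h = fun t => mink (v t) (Kv lam d c c1 t)) (hV : V = fun t => mink (c1 t) (v t))
    (hW : W = fun t => - (mink (c t) (v t) / t)) (he1 : e1 = fun t => - mink (d - c2 t) (v t))
    (he2 : e2 = fun t => lam / t * (1 + mink (c t) d) * V t + lam * W t * mink (c1 t) d - e1 t) :
    HasDerivAt W (-(W t + V t) / t) t ∧
    HasDerivAt V ((h t + 2 * lam * W t + V t) / t + e1 t) t ∧
    HasDerivAt h (e2 t) t ∧ |e1 t| ≤ C * |h t| ∧ |e2 t| ≤ C * |h t| ∧ |W t| ≤ C * |h t| ∧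
    h t + lam * W t + V t = t * mink d (v t) := by
  obtain ⟨E1, E2, E3⟩ := H.est hκ (v t) hv
  obtain ⟨t0, t1, hc, hc1, cc, cc1, c1c1, cc2, c1c2, bcd, bc1d, bc2d, bc2c2, bdd, hK, bK, -⟩ := H
  have ht0 : t ≠ 0 := t0.ne'
  have hB : 0 ≤ B := (abs_nonneg _).trans bdd
  rw [← hD] at E1 E2 E3
  have hht : mink (v t) (Kv lam d c c1 t) = h t := by rw [hh]
  rw [hht] at E1 E2 E3
  have hD0 : 0 ≤ D := by rw [hD]; positivity
  have hDC : D ≤ C := by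
    rw [hC]; have : 0 ≤ 2 * |lam| * B * D := by positivity
    linarith
  have hcomm1 : mink (v t) (c t) = mink (c t) (v t) := mink_comm _ _
  have hcomm2 : mink (v t) (c1 t) = mink (c1 t) (v t) := mink_comm _ _
  have hcomm3 : mink (v t) (c2 t) = mink (c2 t) (v t) := mink_comm _ _
  have hcomm4 : mink (v t) d = mink d (v t) := mink_comm _ _
  have hcomm5 : mink (c1 t) (c t) = mink (c t) (c1 t) := mink_comm _ _
  have hh_eq : h t = lam / t * mink (c t) (v t) - mink (c1 t) (v t) + t * mink d (v t) := by
    rw [← hht]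
    simp only [Kv, mink_add_right, mink_sub_right, mink_smul_right, hcomm1, hcomm2, hcomm4]
  have ha : HasDerivAt (fun s => mink (c s) (v s)) (mink (c1 t) (v t)) t := by
    refine (mink_hasDerivAt hc hv').congr_deriv ?_
    simp only [wedge_apply, mink_sub_right, mink_smul_right, cc, cc1]; ring
  have hβ : HasDerivAt (fun s => mink (c1 s) (v s))
      (mink (c2 t) (v t) - lam / t ^ 2 * mink (c t) (v t)) t := by
    refine (mink_hasDerivAt hc1 hv').congr_deriv ?_
    simp only [wedge_apply, mink_sub_right, mink_smul_right, c1c1, hcomm5, cc1]; ring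
  have hWt : |W t| ≤ D * |h t| := by
    rw [hW]; simp only [abs_neg, abs_div, abs_of_pos t0]
    rw [div_le_iff₀ t0]; linarith
  have hVt : |V t| ≤ D * |h t| := by rw [hV]; exact E2
  have he1t : |e1 t| ≤ D * |h t| := by rw [he1]; simp only [abs_neg]; exact E3
  refine ⟨?_, ?_, ?_, ?_, ?_, ?_, ?_⟩
  · rw [hW]
    refine ((ha.div (hasDerivAt_id t) ht0).neg).congr_deriv ?_
    simp only [hV, id]
    field_simp
    ring
  · rw [hV]
    refine hβ.congr_deriv ?_
    simp only [hh_eq, hW, he1, mink_sub_left]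
    field_simp
    ring
  · have hKd : HasDerivAt (Kv lam d c c1)
        ((-(lam / t ^ 2)) • c t + (lam / t) • c1 t - c2 t + d) t := by
      have k1 : HasDerivAt (fun s : ℝ => lam / s) (-(lam / t ^ 2)) t := by
        refine ((hasDerivAt_const t lam).div (hasDerivAt_id t) ht0).congr_deriv ?_
        simp only [id]; ring
      have := ((k1.smul hc).sub hc1).add ((hasDerivAt_id t).smul_const d)
      refine this.congr_deriv ?_
      rw [one_smul, add_comm ((lam / t) • c1 t)]
    rw [hh]
    refine (mink_hasDerivAt hv' hKd).congr_deriv ?_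
    simp only [Kv, he2, he1, hV, hW, wedge_apply, mink_sub_left, mink_sub_right, mink_smul_right,
      mink_smul_left, mink_add_right, hcomm1, hcomm2, hcomm3, hcomm4, hcomm5, cc, cc1, c1c1]
    field_simp
    ring
  · exact he1t.trans (by gcongr)
  · rw [he2]
    have k1 : |lam / t * (1 + mink (c t) d) * V t| ≤ |lam| * B * (D * |h t|) := by
      rw [abs_mul]
      refine mul_le_mul ?_ hVt (abs_nonneg _) (by positivity)
      rw [abs_mul, abs_div, abs_of_pos t0, add_comm, div_mul_eq_mul_div, div_le_iff₀ t0, mul_assoc]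
      gcongr
    have k2 : |lam * W t * mink (c1 t) d| ≤ |lam| * (D * |h t|) * B := by
      rw [abs_mul, abs_mul]
      gcongr
    have k3 := abs_sub (lam / t * (1 + mink (c t) d) * V t + lam * W t * mink (c1 t) d) (e1 t)
    have k4 := abs_add_le (lam / t * (1 + mink (c t) d) * V t) (lam * W t * mink (c1 t) d)
    have : C * |h t| = |lam| * B * (D * |h t|) + |lam| * (D * |h t|) * B + D * |h t| := by
      rw [hC]; ring
    simp only
    linarith
  · exact hWt.trans (by gcongr)
  · rw [hh_eq, hW, hV]; field_simp; ring

lemma mink_continuous : Continuous (fun q : E n × E n => mink q.1 q.2) := by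
  unfold mink
  fun_prop

lemma mink_continuousAt {f g : ℝ → E n} {t : ℝ} (hf : ContinuousAt f t) (hg : ContinuousAt g t) :
    ContinuousAt (fun s => mink (f s) (g s)) t :=
  ContinuousAt.comp (f := fun s => (f s, g s)) (g := fun q : E n × E n => mink q.1 q.2)
    mink_continuous.continuousAt (hf.prodMk hg)

lemma bdd_near {f : ℝ → ℝ} (hf : ContinuousAt f 0) : ∃ B, ∀ᶠ t in 𝓝[>] (0:ℝ), |f t| ≤ B := by
  refine ⟨|f 0| + 1, ?_⟩
  have : ∀ᶠ t in 𝓝 (0:ℝ), |f t| < |f 0| + 1 := hf.abs.eventually (gt_mem_nhds (by linarith))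
  filter_upwards [nhdsWithin_le_nhds this] with t ht using le_of_lt ht

lemma setup_exists (ε b : ℝ) (hε : 0 < ε) (hb : 0 < b)
    (c : ℝ → E n) (hc : ContDiffOn ℝ (⊤ : ℕ∞) c (Set.Ioo (-ε) b))
    (hcnull : ∀ t ∈ Set.Ioo (-ε) b, mink (c t) (c t) = 0)
    (hcreg : ∀ t ∈ Set.Ioo (-ε) b, mink (deriv c t) (deriv c t) = 1)
    (lam : ℝ) (hlam : 1 < 2 * lam) (d : E n) (hd : mink (c 0) d = -1) :
    ∃ κ B : ℝ, 0 < κ ∧ ∀ᶠ t in 𝓝[>] (0:ℝ),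
      Setup lam κ B d c (deriv c) (deriv (deriv c)) t := by
  have ho : IsOpen (Ioo (-ε) b) := isOpen_Ioo
  have hC1 : ContDiffOn ℝ (⊤ : ℕ∞) (deriv c) (Ioo (-ε) b) := hc.deriv_of_isOpen ho (by simp)
  have hC2 : ContDiffOn ℝ (⊤ : ℕ∞) (deriv (deriv c)) (Ioo (-ε) b) :=
    hC1.deriv_of_isOpen ho (by simp)
  set c1 := deriv c with hc1def
  set c2 := deriv c1 with hc2def
  have hd0 : ∀ t ∈ Ioo (-ε) b, HasDerivAt c (c1 t) t := fun t ht =>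
    ((hc.differentiableOn (by simp)).differentiableAt (ho.mem_nhds ht)).hasDerivAt
  have hd1 : ∀ t ∈ Ioo (-ε) b, HasDerivAt c1 (c2 t) t := fun t ht =>
    ((hC1.differentiableOn (by simp)).differentiableAt (ho.mem_nhds ht)).hasDerivAt
  have const_deriv : ∀ {f : ℝ → ℝ} {f' k t : ℝ}, t ∈ Ioo (-ε) b → HasDerivAt f f' t →
      (∀ s ∈ Ioo (-ε) b, f s = k) → f' = 0 := by
    intro f f' k t ht hf hk
    have : HasDerivAt f 0 t := (hasDerivAt_const t k).congr_of_eventuallyEq (by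
      filter_upwards [ho.mem_nhds ht] with s hs using hk s hs)
    exact hf.unique this
  have i1 : ∀ t ∈ Ioo (-ε) b, mink (c t) (c1 t) = 0 := fun t ht => by
    have := const_deriv ht (mink_hasDerivAt (hd0 t ht) (hd0 t ht)) hcnull
    rw [mink_comm (c1 t)] at this; linarith
  have i2 : ∀ t ∈ Ioo (-ε) b, mink (c t) (c2 t) = -1 := fun t ht => by
    have := const_deriv ht (mink_hasDerivAt (hd0 t ht) (hd1 t ht)) i1
    rw [hcreg t ht] at this; linarith
  have i3 : ∀ t ∈ Ioo (-ε) b, mink (c1 t) (c2 t) = 0 := fun t ht => by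
    have := const_deriv ht (mink_hasDerivAt (hd1 t ht) (hd1 t ht)) hcreg
    rw [mink_comm (c2 t)] at this; linarith
  have h0 : (0:ℝ) ∈ Ioo (-ε) b := ⟨by linarith, hb⟩
  have k0 : ContinuousAt c 0 := (hd0 0 h0).continuousAt
  have k1 : ContinuousAt c1 0 := (hd1 0 h0).continuousAt
  have k2 : ContinuousAt c2 0 := hC2.continuousOn.continuousAt (ho.mem_nhds h0)
  have kd : ContinuousAt (fun _ : ℝ => d) 0 := continuousAt_const
  obtain ⟨B1, b1⟩ := bdd_near (mink_continuousAt k1 kd)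
  obtain ⟨B2, b2⟩ := bdd_near (mink_continuousAt k2 kd)
  obtain ⟨B3, b3⟩ := bdd_near (mink_continuousAt k2 k2)
  have kK : ContinuousAt (fun t : ℝ => 2 * lam * mink (c t) d + 1 - 2 * t * mink (c1 t) d +
      t ^ 2 * mink d d) 0 := by
    have a1 := mink_continuousAt k0 kd
    have a2 := mink_continuousAt k1 kd
    fun_prop
  obtain ⟨B4, b4⟩ := bdd_near kK
  have hKneg : ∀ᶠ t in 𝓝 (0:ℝ), 2 * lam * mink (c t) d + 1 - 2 * t * mink (c1 t) d +
      t ^ 2 * mink d d < -((2 * lam - 1) / 2) :=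
    kK.eventually (gt_mem_nhds (by simp only [hd]; ring_nf; linarith))
  have hlow : ∀ᶠ t in 𝓝 (0:ℝ), 1 / 2 < |mink (c t) d| :=
    (mink_continuousAt k0 kd).abs.eventually (lt_mem_nhds (by
      change 1 / 2 < |mink (c 0) d|
      rw [hd]; norm_num))
  have hO := (mink_hasDerivAt (hd0 0 h0) (hasDerivAt_const 0 d)).isBigO_sub
  obtain ⟨B5, b5⟩ := hO.bound
  have hBmax : ∃ B, B1 ≤ B ∧ B2 ≤ B ∧ B3 ≤ B ∧ B4 ≤ B ∧ B5 ≤ B ∧ |mink d d| ≤ B := by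
    refine ⟨|B1| + |B2| + |B3| + |B4| + |B5| + |mink d d|, ?_⟩
    have := le_abs_self B1
    have := le_abs_self B2
    have := le_abs_self B3
    have := le_abs_self B4
    have := le_abs_self B5
    have := abs_nonneg B1
    have := abs_nonneg B2
    have := abs_nonneg B3
    have := abs_nonneg B4
    have := abs_nonneg B5
    have := abs_nonneg (mink d d)
    refine ⟨?_, ?_, ?_, ?_, ?_, ?_⟩ <;> linarith
  obtain ⟨B, m1, m2, m3, m4, m5, m6⟩ := hBmax
  refine ⟨(2 * lam - 1) / 2, B, by linarith, ?_⟩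
  filter_upwards [b1, b2, b3, b4, nhdsWithin_le_nhds hKneg, nhdsWithin_le_nhds hlow,
    nhdsWithin_le_nhds b5, Ioo_mem_nhdsGT hb, Ioo_mem_nhdsGT (one_pos (α := ℝ))] with
    t b1 b2 b3 b4 hKneg hlow b5 htb ht1
  have ht : t ∈ Ioo (-ε) b := ⟨by linarith [htb.1], htb.2⟩
  have t0 : t ≠ 0 := htb.1.ne'
  have eK : mink (Kv lam d c c1 t) (Kv lam d c c1 t) =
      2 * lam * mink (c t) d + 1 - 2 * t * mink (c1 t) d + t ^ 2 * mink d d := by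
    simp only [Kv, mink_add_left, mink_sub_left, mink_smul_left, mink_add_right, mink_sub_right,
      mink_smul_right, mink_comm d (c t), mink_comm d (c1 t), mink_comm (c1 t) (c t), i1 t ht,
      hcnull t ht, hcreg t ht]
    field_simp
    ring
  refine ⟨htb.1, ht1.2.le, hd0 t ht, hd1 t ht, hcnull t ht, i1 t ht, hcreg t ht, i2 t ht,
    i3 t ht, ?_, b1.trans m1, b2.trans m2, b3.trans m3, m6, ?_, ?_, hlow.le⟩
  · simp only [hd, sub_neg_eq_add, Real.norm_eq_abs, sub_zero, abs_of_pos htb.1] at b5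
    exact b5.trans (mul_le_mul_of_nonneg_right m5 htb.1.le)
  · rw [eK]; linarith
  · rw [eK]; exact b4.trans m4

lemma h_ne {κ : ℝ} (hκ : 0 < κ) (K v : E n) (hK : κ ≤ - mink K K) (hv : mink v v ≤ 0)
    (hv0 : v ≠ 0) : mink v K ≠ 0 := by
  intro h
  have a1 := abs_nonneg (mink (eT n) (eT n))
  have a2 := abs_nonneg (mink (eT n) K)
  have := mink_est κ (|mink (eT n) (eT n)| + |mink (eT n) K| + 1) hκ (by positivity) K v (eT n) hK hv
    (by nlinarith) (by linarith)
  rw [h, abs_zero, mul_zero] at this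
  have h0 := abs_nonpos_iff.1 this
  rw [mink_comm, mink_eT] at h0
  exact null_last_ne v hv hv0 (by linarith)

/-- Proposition 5.6: for 1−2λ < 0, a Darboux transform whose initial point
does not lie on the limit circle of the Calapso transform converges to the original
curve. -/
theorem stmt18 {n : ℕ} (ε b : ℝ) (hε : 0 < ε) (hb : 0 < b)
    (c : ℝ → E n) (hc : ContDiffOn ℝ (⊤ : ℕ∞) c (Set.Ioo (-ε) b))
    (hcnull : ∀ t ∈ Set.Ioo (-ε) b, mink (c t) (c t) = 0)
    (hcne : ∀ t ∈ Set.Ioo (-ε) b, c t ≠ 0)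
    (hcreg : ∀ t ∈ Set.Ioo (-ε) b, mink (deriv c t) (deriv c t) = 1)
    (lam : ℝ) (hlam : 1 < 2 * lam)
    (p : ℝ) (hp : p ∈ Set.Ioo (0:ℝ) b)
    (T : ℝ → E n →L[ℝ] E n) (hTp : T p = 1)
    (hT : ∀ t ∈ Set.Ioo (0:ℝ) b,
      HasDerivAt T ((lam / t ^ 2) • (T t * wedge (c t) (deriv c t))) t)
    (ch : ℝ → E n)
    (hchne : ∀ t ∈ Set.Ioo (0:ℝ) b, ch t ≠ 0)
    (hchnull : ∀ t ∈ Set.Ioo (0:ℝ) b, mink (ch t) (ch t) = 0)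
    (hch : ∀ t ∈ Set.Ioo (0:ℝ) b, HasDerivAt ch
      ((-(lam / t ^ 2)) •
        (mink (c t) (ch t) • deriv c t - mink (deriv c t) (ch t) • c t)) t)
    (hnot : ¬ projAccum b (fun t => (T t) (c t)) (ch p)) :
    ∃ r : ℝ → ℝ, (∀ t ∈ Set.Ioo (0:ℝ) b, r t ≠ 0) ∧
      Tendsto (fun t : ℝ => r t • ch t) (𝓝[>] 0) (𝓝 (c 0)) := by
  have h00 : (0:ℝ) ∈ Ioo (-ε) b := ⟨by linarith, hb⟩
  have hsubb : ∀ t ∈ Ioo (0:ℝ) b, t ∈ Ioo (-ε) b := fun t ht => ⟨by linarith [ht.1], ht.2⟩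
  set ℓ := c 0 (Fin.last (n + 1)) with hℓ
  have hℓ0 : ℓ ≠ 0 := null_last_ne _ (hcnull 0 h00).le (hcne 0 h00)
  set d : E n := (1 / ℓ) • eT n with hd
  have hmd : ∀ x : E n, mink x d = - x (Fin.last (n + 1)) / ℓ := fun x => by
    rw [hd, mink_smul_right, mink_eT]; ring
  have hcd : mink (c 0) d = -1 := by rw [hmd, ← hℓ, neg_div, div_self hℓ0]
  obtain ⟨κ, B, hκ, hS⟩ := setup_exists ε b hε hb c hc hcnull hcreg lam hlam d hcd
  obtain ⟨δ, hδ, hsub⟩ := mem_nhdsGT_iff_exists_Ioo_subset.1 (inter_mem hS (Ioo_mem_nhdsGT hb))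
  have hδ0 : (0:ℝ) < δ := hδ
  have hSt : ∀ t ∈ Ioo (0:ℝ) δ, Setup lam κ B d c (deriv c) (deriv (deriv c)) t :=
    fun t ht => (hsub ht).1
  have hbt : ∀ t ∈ Ioo (0:ℝ) δ, t ∈ Ioo (0:ℝ) b := fun t ht => (hsub ht).2
  have hB : 0 ≤ B := (abs_nonneg _).trans (hSt (δ / 2) ⟨by linarith, by linarith⟩).bdd
  obtain ⟨cal1, cal2, cal3⟩ := calapso (lam := lam) hp T hTp hT
  have hTch := darboux_const (lam := lam) hp T hTp hT ch hch
  -- the timelike solution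
  set y : ℝ → E n := fun t => madj (T t) (eT n) with hy
  have hyy : ∀ t ∈ Ioo (0:ℝ) b, mink (y t) (y t) = -1 := fun t ht => by
    rw [hy]; simp only; rw [cal2 _ _ t ht, mink_eT]; simp [eT]
  have hyne : ∀ t ∈ Ioo (0:ℝ) b, y t ≠ 0 := fun t ht h0 => by
    have := hyy t ht
    rw [h0] at this
    simp [mink] at this
  have solY := fun t ht => (hSt t ht).sol hκ y (by rw [hyy t (hbt t ht)]; norm_num)
    (cal1 (eT n) t (hbt t ht)) _ _ rfl rfl _ _ _ _ _ rfl rfl rfl rfl rfl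
  have solC := fun t ht => (hSt t ht).sol hκ ch (hchnull t (hbt t ht)).le
    (hch t (hbt t ht)) _ _ rfl rfl _ _ _ _ _ rfl rfl rfl rfl rfl
  obtain ⟨hy0, -, hylim⟩ := h_conv _ _ δ _ hδ0 (fun t ht => (solY t ht).2.2.1)
    (fun t ht => (solY t ht).2.2.2.2.1)
    (fun t ht => h_ne hκ _ _ (hSt t ht).hK (by rw [hyy t (hbt t ht)]; norm_num)
      (hyne t (hbt t ht)))
  have hybd : ∀ᶠ t in 𝓝[>] (0:ℝ), |mink (y t) (Kv lam d c (deriv c) t)| < |hy0| + 1 :=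
    hylim.abs.eventually (gt_mem_nhds (by linarith))
  obtain ⟨M, hM, hlow⟩ : ∃ M > 0, ∀ᶠ t in 𝓝[>] (0:ℝ), t ≤ M * |mink (c t) (y t)| := by
    refine ⟨2 * ((1 + 2 / 1) * (B + |hy0| + 1)), by positivity, ?_⟩
    filter_upwards [hybd, Ioo_mem_nhdsGT hδ0] with t h1 ht
    have H := hSt t ht
    have e : mink (Kv lam d c (deriv c) t) (c t) = t * mink (c t) d := by
      rw [mink_comm]
      simp only [Kv, mink_add_right, mink_sub_right, mink_smul_right, H.cc, H.cc1]; ring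
    have := mink_est 1 (B + |hy0| + 1) one_pos (by positivity) (y t) (c t) (Kv lam d c (deriv c) t)
      (by rw [hyy t (hbt t ht)]; norm_num) H.cc.le
      (H.bK.trans (by nlinarith [abs_nonneg hy0])) (by rw [mink_comm]; linarith)
    rw [e, abs_mul, abs_of_pos H.t0] at this
    nlinarith [H.cdlow, H.t0]
  have hclast : ∀ t ∈ Ioo (0:ℝ) b, c t (Fin.last (n + 1)) ≠ 0 := fun t ht =>
    null_last_ne _ (hcnull t (hsubb t ht)).le (hcne t (hsubb t ht))
  have hchlast : ∀ t ∈ Ioo (0:ℝ) b, ch t (Fin.last (n + 1)) ≠ 0 := fun t ht =>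
    null_last_ne _ (hchnull t ht).le (hchne t ht)
  rcases scalar_main lam δ _ hlam hδ0 _ _ _ _ _ (fun t ht => (solC t ht).1)
    (fun t ht => (solC t ht).2.1) (fun t ht => (solC t ht).2.2.1)
    (fun t ht => (solC t ht).2.2.2.1) (fun t ht => (solC t ht).2.2.2.2.1)
    (fun t ht => (solC t ht).2.2.2.2.2.1)
    (fun t ht => h_ne hκ _ _ (hSt t ht).hK (hchnull t (hbt t ht)).le
      (hchne t (hbt t ht))) with ⟨ts, hts, hWts⟩ | ⟨η, hη, M', hev⟩
  · exfalso
    apply hnot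
    have hmem : ∀ᶠ k in atTop, ts k ∈ Ioo (0:ℝ) b := hts.eventually (Ioo_mem_nhdsGT hb)
    have hulast : ∀ t, (T t (c t)) (Fin.last (n + 1)) = - mink (c t) (y t) := fun t => by
      rw [hy]; simp only; rw [mink_madj, mink_eT]; ring
    have key := null_tendsto atTop (fun k => T (ts k) (c (ts k))) (fun _ => ch p)
      (by
        filter_upwards [hmem] with k hk
        rw [cal3 _ _ _ hk, hcnull _ (hsubb _ hk)])
      (by
        filter_upwards [hts.eventually hlow, hmem] with k hk hk2
        rw [hulast]
        intro h0
        rw [neg_eq_zero] at h0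
        rw [h0, abs_zero, mul_zero] at hk
        linarith [hk2.1])
      (Eventually.of_forall fun _ => hchnull p hp) (ch p) tendsto_const_nhds
      (by
        have hz : Tendsto (fun k => M * |(-(mink (c (ts k)) (ch (ts k)) / ts k))|) atTop (𝓝 0) := by
          simpa using hWts.abs.const_mul M
        refine squeeze_zero_norm' ?_ hz
        filter_upwards [hts.eventually hlow, hmem] with k hk hk2
        rw [hulast, ← hTch _ hk2, cal3 _ _ _ hk2, Real.norm_eq_abs, abs_div, abs_neg, abs_neg,
          abs_div, abs_of_pos hk2.1]
        have hpos : 0 < |mink (c (ts k)) (y (ts k))| := by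
          by_contra hcon
          push Not at hcon
          nlinarith [hk2.1]
        rw [div_le_iff₀ hpos]
        have h1 := hk2.1
        have : 1 ≤ M * |mink (c (ts k)) (y (ts k))| / ts k := by
          rw [le_div_iff₀ h1]; linarith
        calc _ ≤ |mink (c (ts k)) (ch (ts k))| * (M * |mink (c (ts k)) (y (ts k))| / ts k) :=
              le_mul_of_one_le_right (abs_nonneg _) this
          _ = _ := by ring)
    obtain ⟨N, hN⟩ := eventually_atTop.1 hmem
    refine ⟨fun i => ts (i + N), fun i => (ch p) (Fin.last (n + 1)) /
      (T (ts (i + N)) (c (ts (i + N)))) (Fin.last (n + 1)), fun i => hN _ (by omega), ?_, ?_⟩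
    · exact (tendsto_add_atTop_iff_nat N).2 (tendsto_nhdsWithin_iff.1 hts).1
    · exact (tendsto_add_atTop_iff_nat N).2 key
  · refine ⟨fun t => c t (Fin.last (n + 1)) / ch t (Fin.last (n + 1)),
      fun t ht => div_ne_zero (hclast t ht) (hchlast t ht), ?_⟩
    have hc0 : Tendsto c (𝓝[>] 0) (𝓝 (c 0)) :=
      (hc.continuousOn.continuousAt (isOpen_Ioo.mem_nhds h00)).tendsto.mono_left nhdsWithin_le_nhds
    refine null_tendsto (𝓝[>] 0) ch c ?_ ?_ ?_ (c 0) hc0 ?_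
    · filter_upwards [Ioo_mem_nhdsGT hb] with t ht using hchnull t ht
    · filter_upwards [Ioo_mem_nhdsGT hb] with t ht using hchlast t ht
    · filter_upwards [Ioo_mem_nhdsGT hb] with t ht using hcnull t (hsubb t ht)
    · have hz : Tendsto (fun t : ℝ => M' / (η * |ℓ|) * t ^ 2) (𝓝[>] 0) (𝓝 0) := by
        have : ContinuousAt (fun t : ℝ => M' / (η * |ℓ|) * t ^ 2) 0 := by fun_prop
        have := this.tendsto
        simp only [ne_eq, OfNat.ofNat_ne_zero, not_false_eq_true, zero_pow, mul_zero] at this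
        exact this.mono_left nhdsWithin_le_nhds
      refine squeeze_zero_norm' ?_ hz
      filter_upwards [hev, Ioo_mem_nhdsGT hδ0] with t ht ht2
      obtain ⟨u1, u2⟩ := ht
      have t0 : 0 < t := ht2.1
      have hid := (solC t ht2).2.2.2.2.2.2
      rw [hid, mink_comm, hmd, abs_mul, abs_of_pos t0, abs_div, abs_neg] at u1
      rw [abs_neg, abs_div, abs_of_pos t0, div_le_iff₀ t0] at u2
      have hlp : 0 < |ℓ| := abs_pos.2 hℓ0
      have hchp : 0 < |ch t (Fin.last (n + 1))| := abs_pos.2 (hchlast t (hbt t ht2))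
      rw [mul_div_assoc', le_div_iff₀ hlp] at u1
      rw [Real.norm_eq_abs, abs_div, mink_comm, div_le_iff₀ hchp]
      have hM' : 0 ≤ M' := by
        by_contra hcon
        push Not at hcon
        nlinarith [abs_nonneg (mink (c t) (ch t))]
      have hηl : 0 < η * |ℓ| := by positivity
      calc _ ≤ M' * t := u2
        _ = M' / (η * |ℓ|) * t * (η * |ℓ|) := by field_simp
        _ ≤ M' / (η * |ℓ|) * t * (t * |ch t (Fin.last (n + 1))|) := by gcongr
        _ = _ := by ring
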